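/- arXiv:2411.10555 — 8 statements merged into one kernel-verified Lean document; each statement's English description precedes it below -/
import Mathlib

section
/- Let p ≥ 1 and for each i = 1,…,p let X_i be a nonempty closed convex subset of ℝ^{n_i}; set X = X_1 × ⋯ × X_p ⊆ ℝ^n with n = n_1 + ⋯ + n_p. Let f : ℝ^n → ℝ be continuously differentiable with block-coordinatewise Lipschitz gradient: for each i there is L_i > 0 such that ‖∇_i f(x + U_i h_i) − ∇_i f(x)‖ ≤ L_i ‖h_i‖ for all x ∈ ℝ^n and all h_i ∈ ℝ^{n_i}, where U_i : ℝ^{n_i} → ℝ^n is the canonical block embedding and ∇_i f = U_iᵀ ∇f; set L = max_i L_i. Let h : X → ℝ be continuous and α-strongly convex for some α > 0, decomposing as h(x) = Σ_{i=1}^p h_i(x(i)), and let ω be a continuously differentiable distance generating function on X with modulus α (i.e. ⟨x − z, ∇ω(x) − ∇ω(z)⟩ ≥ α‖x − z‖² for all x, z ∈ X) whose Bregman prox-function V(x,z) = ω(x) − ω(z) − ⟨∇ω(z), x − z⟩ decomposes as V(x,z) = Σ_{i=1}^p V_i(x(i), z(i)). Set Φ = f + h, Φ* = min_{x ∈ X}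 Φ(x), and D = ((Φ(x_0) − Φ*)/L)^{1/2}. Starting from x_0 ∈ X, run coordinate mirror descent with stepsizes γ_{k,i} = α/L: for k = 0,…,N−1 and i = 1,…,p, the i-th block is updated by x_k^i(i) = argmin_{u_i ∈ X_i} [⟨∇_i f(x_k^{i−1}), u_i⟩ + (1/γ_{k,i}) V_i(u_i, x_k^{i−1}(i)) + h_i(u_i)] while x_k^i(j) = x_k^{i−1}(j) for j ≠ i, and x_{k+1}^0 = x_k^p. Define g_{X,k,i} = (x_k^{i−1}(i) − x_k^i(i))/γ_{k,i} and the convergence criterion Δ(x_k, x_{k−1}) = Σ_{i=1}^p ‖g_{X,k,i}‖². Then min_{1 ≤ k ≤ N} Δ(x_k, x_{k−1}) ≤ 2 D² L² / (N α²). -/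
open scoped RealInnerProductSpace

/-- The ambient product space `ℝ^{n_1} × ⋯ × ℝ^{n_p}` with the Euclidean (ℓ²) norm. -/
noncomputable abbrev BlockSpace (p : ℕ) (n : Fin p → ℕ) :=
  PiLp 2 (fun i : Fin p => EuclideanSpace ℝ (Fin (n i)))

/-- `blockGrad f i x = ∇_i f(x)`, the gradient of `f` with respect to the `i`-th block of
variables, evaluated at `x`. -/
noncomputable def blockGrad {p : ℕ} {n : Fin p → ℕ}
    (f : BlockSpace p n → ℝ) (i : Fin p) (x : BlockSpace p n) :
    EuclideanSpace ℝ (Fin (n i)) :=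
  gradient (fun u => f (WithLp.toLp 2 (Function.update x i u))) (x i)

lemma aux_deriv_nonneg (q : ℝ → ℝ) (c : ℝ) (hq : HasDerivAt q c 0) (h0 : q 0 = 0)
    (hpos : ∀ t, 0 ≤ t → t ≤ 1 → 0 ≤ q t) : 0 ≤ c := by
  have h1 := hq.tendsto_slope_zero_right
  refine ge_of_tendsto h1 ?_
  have : Set.Ioo (0:ℝ) 1 ∈ nhdsWithin (0:ℝ) (Set.Ioi 0) := Ioo_mem_nhdsGT one_pos
  filter_upwards [this] with t ht
  have := hpos t ht.1.le ht.2.le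
  simp only [zero_add, h0, sub_zero, smul_eq_mul]
  have := ht.1
  positivity

lemma aux_line {E : Type*} [NormedAddCommGroup E] [InnerProductSpace ℝ E] [CompleteSpace E]
    (F : E → ℝ) (hF : Differentiable ℝ F) (a d : E) (t : ℝ) :
    HasDerivAt (fun t : ℝ => F (a + t • d)) ⟪gradient F (a + t • d), d⟫ t := by
  have h1 : HasDerivAt (fun t : ℝ => a + t • d) d t := by
    simpa using ((hasDerivAt_id t).smul_const d).const_add a
  have h2 := (hF (a + t • d)).hasGradientAt.hasFDerivAt
  exact h2.comp_hasDerivAt t h1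

lemma aux_descent {E : Type*} [NormedAddCommGroup E] [InnerProductSpace ℝ E] [CompleteSpace E]
    (F : E → ℝ) (hF : Differentiable ℝ F) (a d : E) (L : ℝ)
    (hL : ∀ e, ‖gradient F (a + e) - gradient F a‖ ≤ L * ‖e‖) :
    F (a + d) ≤ F a + ⟪gradient F a, d⟫ + L / 2 * ‖d‖ ^ 2 := by
  have hd : ∀ t : ℝ, HasDerivAt
      (fun t : ℝ => F (a + t • d) - t * ⟪gradient F a, d⟫ - L / 2 * ‖d‖ ^ 2 * t ^ 2)
      (⟪gradient F (a + t • d), d⟫ - ⟪gradient F a, d⟫ - L / 2 * ‖d‖ ^ 2 * (2 * t)) t := by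
    intro t
    have h2 : HasDerivAt (fun t : ℝ => t * ⟪gradient F a, d⟫) ⟪gradient F a, d⟫ t := by
      simpa using (hasDerivAt_id t).mul_const ⟪gradient F a, d⟫
    have h3 : HasDerivAt (fun t : ℝ => L / 2 * ‖d‖ ^ 2 * t ^ 2) (L / 2 * ‖d‖ ^ 2 * (2 * t)) t := by
      simpa using (hasDerivAt_pow 2 t).const_mul (L / 2 * ‖d‖ ^ 2)
    exact ((aux_line F hF a d t).sub h2).sub h3
  have hanti := antitoneOn_of_deriv_nonpos (convex_Icc (0:ℝ) 1)
    (fun t _ => (hd t).continuousAt.continuousWithinAt)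
    (fun t _ => (hd t).differentiableAt.differentiableWithinAt)
    (by
      intro t ht
      rw [interior_Icc] at ht
      rw [(hd t).deriv, ← inner_sub_left]
      have h1 := real_inner_le_norm (gradient F (a + t • d) - gradient F a) d
      have h2 := hL (t • d)
      rw [norm_smul, Real.norm_of_nonneg ht.1.le] at h2
      nlinarith [mul_le_mul_of_nonneg_right h2 (norm_nonneg d)])
  have := hanti (Set.left_mem_Icc.2 zero_le_one) (Set.right_mem_Icc.2 zero_le_one) zero_le_one
  simp only [one_smul, zero_smul, add_zero, one_mul, zero_mul, one_pow, sub_zero, mul_one] at this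
  norm_num at this
  simp only [inner_gradient_left] at this ⊢
  linarith

lemma aux_sum_diff {p : ℕ} {E : Fin p → Type*} (G : ∀ i, E i → ℝ) (i : Fin p)
    (x y : ∀ i, E i) (hxy : ∀ j, j ≠ i → x j = y j) :
    ∑ j, G j (x j) - ∑ j, G j (y j) = G i (x i) - G i (y i) := by
  rw [← Finset.sum_sub_distrib]
  refine Finset.sum_eq_single i ?_ (by simp)
  intro j _ hj
  rw [hxy j hj, sub_self]

lemma aux_step {p : ℕ} {n : Fin p → ℕ}
    (Xb : ∀ i : Fin p, Set (EuclideanSpace ℝ (Fin (n i))))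
    (hXcv : ∀ i, Convex ℝ (Xb i))
    (X : Set (BlockSpace p n)) (hX : X = {x : BlockSpace p n | ∀ i, x i ∈ Xb i})
    (f : BlockSpace p n → ℝ) (hf : ContDiff ℝ 1 f)
    (L : ℝ) (hL : 0 < L) (i : Fin p) (z y : BlockSpace p n)
    (hLip : ∀ (x : BlockSpace p n) (hi : EuclideanSpace ℝ (Fin (n i))),
      ‖blockGrad f i (WithLp.toLp 2 (Function.update x i (x i + hi))) - blockGrad f i x‖ ≤ L * ‖hi‖)
    (α : ℝ) (hα : 0 < α)
    (h : BlockSpace p n → ℝ) (hhc : ConvexOn ℝ X h)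
    (hb : ∀ i : Fin p, EuclideanSpace ℝ (Fin (n i)) → ℝ)
    (hhdecomp : ∀ x : BlockSpace p n, h x = ∑ i, hb i (x i))
    (ω : BlockSpace p n → ℝ) (hω : ContDiff ℝ 1 ω)
    (hωmod : ∀ x ∈ X, ∀ z ∈ X,
      α * ‖x - z‖ ^ 2 ≤ ⟪x - z, gradient ω x - gradient ω z⟫)
    (Vb : ∀ i : Fin p,
      EuclideanSpace ℝ (Fin (n i)) → EuclideanSpace ℝ (Fin (n i)) → ℝ)
    (hVdecomp : ∀ x z : BlockSpace p n,
      ω x - ω z - ⟪gradient ω z, x - z⟫ = ∑ i, Vb i (x i) (z i))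
    (hz : z ∈ X) (hy : y ∈ X)
    (hupdate : ∀ u ∈ Xb i,
        ⟪blockGrad f i z, y i⟫ + (L / α) * Vb i (y i) (z i) + hb i (y i)
          ≤ ⟪blockGrad f i z, u⟫ + (L / α) * Vb i u (z i) + hb i u)
    (hfix : ∀ j : Fin p, j ≠ i → y j = z j) :
    L / 2 * ‖z i - y i‖ ^ 2 ≤ (f z + h z) - (f y + h y) := by
  have hfd : Differentiable ℝ f := hf.differentiable (by norm_num)
  have hωd : Differentiable ℝ ω := hω.differentiable (by norm_num)
  -- the descent lemma on block i
  have hupd : y = WithLp.toLp 2 (Function.update z i (y i)) := by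
    ext j : 1
    by_cases hj : j = i
    · subst hj; simp
    · simp [hj, hfix j hj]
  have hdesc : f y ≤ f z + ⟪blockGrad f i z, y i - z i⟫ + L / 2 * ‖y i - z i‖ ^ 2 := by
    let F : EuclideanSpace ℝ (Fin (n i)) → ℝ :=
      fun u => f (WithLp.toLp 2 (Function.update z i u))
    have hFd : Differentiable ℝ F := by
      refine hfd.comp ?_
      refine (PiLp.continuousLinearEquiv 2 ℝ
        (fun i : Fin p => EuclideanSpace ℝ (Fin (n i)))).symm.differentiable.comp ?_
      intro u
      exact (hasFDerivAt_update (𝕜 := ℝ) (z : ∀ j, EuclideanSpace ℝ (Fin (n j))) u).differentiableAt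
    have hFg : ∀ e, gradient F (z i + e) =
        blockGrad f i (WithLp.toLp 2 (Function.update z i (z i + e))) := by
      intro e
      simp [blockGrad, F]
    have hF0 : gradient F (z i) = blockGrad f i z := rfl
    have := aux_descent F hFd (z i) (y i - z i) L (by
      intro e
      rw [hFg, hF0]
      exact hLip z e)
    rw [hF0, add_sub_cancel] at this
    have h1 : F (y i) = f y := by simp only [F]; rw [← hupd]
    have h2 : F (z i) = f z := by simp [F]
    rwa [h1, h2] at this
  -- optimality
  have hzX : ∀ j, z j ∈ Xb j := by rw [hX] at hz; exact hz
  have hyX : ∀ j, y j ∈ Xb j := by rw [hX] at hy; exact hy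
  have hc : 0 ≤ (⟪blockGrad f i z, z i - y i⟫ - L / α * ⟪gradient ω z, z - y⟫ + (h z - h y))
      + L / α * ⟪gradient ω y, z - y⟫ := by
    refine aux_deriv_nonneg (fun t => t * (⟪blockGrad f i z, z i - y i⟫
      - L / α * ⟪gradient ω z, z - y⟫ + (h z - h y))
      + L / α * (ω (y + t • (z - y)) - ω y)) _ ?_ (by simp) ?_
    · have h1 := aux_line ω hωd y (z - y) 0
      rw [zero_smul, add_zero] at h1
      have h2 := (h1.sub_const (ω y)).const_mul (L / α)
      have h3 := (hasDerivAt_id (0:ℝ)).mul_const (⟪blockGrad f i z, z i - y i⟫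
        - L / α * ⟪gradient ω z, z - y⟫ + (h z - h y))
      have h4 := h3.add h2
      rw [one_mul] at h4
      exact h4
    · intro t ht0 ht1
      set w : BlockSpace p n := y + t • (z - y) with hw
      have hwi : w i = y i + t • (z i - y i) := by simp [hw]
      have hwj : ∀ j, j ≠ i → w j = y j := by
        intro j hj
        simp [hw, hfix j hj]
      have hwmem : w i ∈ Xb i := by
        rw [hwi]
        exact (hXcv i).add_smul_sub_mem (hyX i) (hzX i) ⟨ht0, ht1⟩
      have h1 := hupdate _ hwmem
      have h2 : h w - h y = hb i (w i) - hb i (y i) := by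
        rw [hhdecomp, hhdecomp]
        exact aux_sum_diff hb i w y hwj
      have h3 : (ω w - ω z - ⟪gradient ω z, w - z⟫) - (ω y - ω z - ⟪gradient ω z, y - z⟫)
          = Vb i (w i) (z i) - Vb i (y i) (z i) := by
        rw [hVdecomp, hVdecomp]
        exact aux_sum_diff (fun j u => Vb j u (z j)) i w y hwj
      have h4 : ⟪gradient ω z, w - z⟫ = ⟪gradient ω z, y - z⟫ + t * ⟪gradient ω z, z - y⟫ := by
        rw [← real_inner_smul_right, ← inner_add_right]
        congr 1
        rw [hw]; abel
      have h5 : h w ≤ (1 - t) * h y + t * h z := by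
        have := hhc.2 hy hz (sub_nonneg.2 ht1) ht0 (by ring)
        have e : (1 - t) • y + t • z = w := by rw [hw]; module
        rw [e] at this
        simpa using this
      have h6 : ⟪blockGrad f i z, w i⟫ = ⟪blockGrad f i z, y i⟫
          + t * ⟪blockGrad f i z, z i - y i⟫ := by
        rw [hwi, inner_add_right, real_inner_smul_right]
      have h7 : L / α * Vb i (w i) (z i) - L / α * Vb i (y i) (z i)
          = L / α * (ω w - ω y) - t * (L / α * ⟪gradient ω z, z - y⟫) := by
        rw [← mul_sub, ← h3, h4]; ring
      show 0 ≤ t * (⟪blockGrad f i z, z i - y i⟫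
        - L / α * ⟪gradient ω z, z - y⟫ + (h z - h y)) + L / α * (ω w - ω y)
      linarith
  have hmod := hωmod z hz y hy
  have hnorm : ‖z i - y i‖ ^ 2 ≤ ‖z - y‖ ^ 2 := by
    rw [PiLp.norm_sq_eq_of_L2 _ (z - y)]
    exact Finset.single_le_sum (f := fun j => ‖(z - y) j‖ ^ 2) (fun j _ => sq_nonneg _)
      (Finset.mem_univ i)
  have hkey : L * ‖z i - y i‖ ^ 2 ≤ L / α * ⟪z - y, gradient ω z - gradient ω y⟫ := by
    calc L * ‖z i - y i‖ ^ 2 ≤ L * ‖z - y‖ ^ 2 := by gcongr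
      _ = L / α * (α * ‖z - y‖ ^ 2) := by field_simp
      _ ≤ _ := by gcongr
  rw [real_inner_comm, inner_sub_left, mul_sub] at hkey
  have e1 : ⟪blockGrad f i z, y i - z i⟫ = - ⟪blockGrad f i z, z i - y i⟫ := by
    rw [← inner_neg_right, neg_sub]
  rw [e1, norm_sub_rev] at hdesc
  linarith

/-- Non-asymptotic stationary convergence of coordinate mirror descent.
With blockwise Lipschitz gradients (constants `L_i`, `L = max L_i`), an `α`-strongly convex
separable `h`, a distance generating function `ω` of modulus `α` with blockwise decomposable
prox-function, and stepsizes `γ = α / L`, after `N` outer iterations one has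
`min_{1 ≤ k ≤ N} Δ(x_k, x_{k-1}) ≤ 2 D² L² / (N α²)`. -/
theorem stmt0 {p : ℕ} (hp : 0 < p) {n : Fin p → ℕ}
    (Xb : ∀ i : Fin p, Set (EuclideanSpace ℝ (Fin (n i))))
    (hXne : ∀ i, (Xb i).Nonempty) (hXcl : ∀ i, IsClosed (Xb i))
    (hXcv : ∀ i, Convex ℝ (Xb i))
    (X : Set (BlockSpace p n)) (hX : X = {x : BlockSpace p n | ∀ i, x i ∈ Xb i})
    (f : BlockSpace p n → ℝ) (hf : ContDiff ℝ 1 f)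
    (Lb : Fin p → ℝ) (hLbpos : ∀ i, 0 < Lb i)
    (hLip : ∀ (i : Fin p) (x : BlockSpace p n) (hi : EuclideanSpace ℝ (Fin (n i))),
      ‖blockGrad f i (WithLp.toLp 2 (Function.update x i (x i + hi))) - blockGrad f i x‖ ≤ Lb i * ‖hi‖)
    (L : ℝ) (hLub : ∀ i, Lb i ≤ L) (hLmem : ∃ i, Lb i = L)
    (α : ℝ) (hα : 0 < α)
    (h : BlockSpace p n → ℝ) (hhcont : ContinuousOn h X) (hhsc : StrongConvexOn X α h)
    (hb : ∀ i : Fin p, EuclideanSpace ℝ (Fin (n i)) → ℝ)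
    (hhdecomp : ∀ x : BlockSpace p n, h x = ∑ i, hb i (x i))
    (ω : BlockSpace p n → ℝ) (hω : ContDiff ℝ 1 ω)
    (hωmod : ∀ x ∈ X, ∀ z ∈ X,
      α * ‖x - z‖ ^ 2 ≤ ⟪x - z, gradient ω x - gradient ω z⟫)
    (Vb : ∀ i : Fin p,
      EuclideanSpace ℝ (Fin (n i)) → EuclideanSpace ℝ (Fin (n i)) → ℝ)
    (hVdecomp : ∀ x z : BlockSpace p n,
      ω x - ω z - ⟪gradient ω z, x - z⟫ = ∑ i, Vb i (x i) (z i))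
    (N : ℕ) (hN : 0 < N)
    (γ : ℝ) (hγ : γ = α / L)
    (iter : ℕ → ℕ → BlockSpace p n)
    (hinit : iter 0 0 ∈ X)
    (hlink : ∀ k, iter (k + 1) 0 = iter k p)
    (hupdate : ∀ k < N, ∀ i : Fin p,
      iter k ((i : ℕ) + 1) i ∈ Xb i ∧
      ∀ u ∈ Xb i,
        ⟪blockGrad f i (iter k (i : ℕ)), iter k ((i : ℕ) + 1) i⟫
            + (1 / γ) * Vb i (iter k ((i : ℕ) + 1) i) (iter k (i : ℕ) i)
            + hb i (iter k ((i : ℕ) + 1) i)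
          ≤ ⟪blockGrad f i (iter k (i : ℕ)), u⟫
            + (1 / γ) * Vb i u (iter k (i : ℕ) i) + hb i u)
    (hfix : ∀ k < N, ∀ i j : Fin p, j ≠ i →
      iter k ((i : ℕ) + 1) j = iter k (i : ℕ) j)
    (Φstar : ℝ) (hΦstar : IsLeast ((fun x => f x + h x) '' X) Φstar)
    (D : ℝ) (hD : D = Real.sqrt ((f (iter 0 0) + h (iter 0 0) - Φstar) / L)) :
    ∃ k < N, ∑ i : Fin p,
        ‖(1 / γ) • (iter k (i : ℕ) i - iter k ((i : ℕ) + 1) i)‖ ^ 2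
      ≤ 2 * D ^ 2 * L ^ 2 / ((N : ℝ) * α ^ 2) := by
  obtain ⟨i0, hi0⟩ := hLmem
  have hL : 0 < L := hi0 ▸ hLbpos i0
  have hγ' : 1 / γ = L / α := by rw [hγ, one_div_div]
  have hhc : ConvexOn ℝ X h := by
    rw [← strongConvexOn_zero]
    exact hhsc.mono hα.le
  rw [hγ'] at hupdate ⊢
  have hstepmem : ∀ k < N, ∀ i : Fin p, iter k i ∈ X → iter k ((i : ℕ) + 1) ∈ X := by
    intro k hk i hi
    rw [hX] at hi ⊢
    intro j
    by_cases hj : j = i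
    · subst hj; exact (hupdate k hk j).1
    · rw [hfix k hk i j hj]; exact hi j
  have hinner : ∀ k < N, iter k 0 ∈ X → ∀ m ≤ p, iter k m ∈ X := by
    intro k hk h0 m
    induction m with
    | zero => intro _; exact h0
    | succ m ih => intro hm; exact hstepmem k hk ⟨m, hm⟩ (ih (by omega))
  have houter : ∀ k ≤ N, iter k 0 ∈ X := by
    intro k
    induction k with
    | zero => intro _; exact hinit
    | succ k ih =>
      intro hk
      rw [hlink]
      exact hinner k (by omega) (ih (by omega)) p le_rfl
  have hstep : ∀ k < N, ∀ i : Fin p, L / 2 * ‖iter k i i - iter k ((i : ℕ) + 1) i‖ ^ 2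
      ≤ (f (iter k i) + h (iter k i)) - (f (iter k ((i : ℕ) + 1)) + h (iter k ((i : ℕ) + 1))) := by
    intro k hk i
    have hz := hinner k hk (houter k hk.le) i i.2.le
    exact aux_step Xb hXcv X hX f hf L hL i _ _
      (fun x e => (hLip i x e).trans (mul_le_mul_of_nonneg_right (hLub i) (norm_nonneg e)))
      α hα h hhc hb hhdecomp ω hω hωmod Vb hVdecomp hz (hstepmem k hk i hz)
      (hupdate k hk i).2 (hfix k hk i)
  have hsweep : ∀ k < N, L / 2 * ∑ i : Fin p, ‖iter k i i - iter k ((i : ℕ) + 1) i‖ ^ 2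
      ≤ (f (iter k 0) + h (iter k 0)) - (f (iter (k + 1) 0) + h (iter (k + 1) 0)) := by
    intro k hk
    rw [Finset.mul_sum, hlink]
    refine (Finset.sum_le_sum fun i _ => hstep k hk i).trans ?_
    rw [Fin.sum_univ_eq_sum_range (fun i => (f (iter k i) + h (iter k i))
      - (f (iter k (i + 1)) + h (iter k (i + 1)))) p,
      Finset.sum_range_sub' (fun i => f (iter k i) + h (iter k i))]
  have htotal : ∑ k ∈ Finset.range N,
      L / 2 * ∑ i : Fin p, ‖iter k i i - iter k ((i : ℕ) + 1) i‖ ^ 2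
      ≤ f (iter 0 0) + h (iter 0 0) - Φstar := by
    refine (Finset.sum_le_sum fun k hk => hsweep k (Finset.mem_range.1 hk)).trans ?_
    rw [Finset.sum_range_sub' (fun k => f (iter k 0) + h (iter k 0))]
    have := hΦstar.2 ⟨_, houter N le_rfl, rfl⟩
    simp only at this
    linarith
  have hgap : 0 ≤ f (iter 0 0) + h (iter 0 0) - Φstar :=
    sub_nonneg.2 (hΦstar.2 ⟨_, hinit, rfl⟩)
  have hD2 : D ^ 2 = (f (iter 0 0) + h (iter 0 0) - Φstar) / L := by
    rw [hD, Real.sq_sqrt (by positivity)]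
  have hNpos : (0:ℝ) < N := by exact_mod_cast hN
  by_contra! hcon
  have hlow : ∑ k ∈ Finset.range N, (f (iter 0 0) + h (iter 0 0) - Φstar) / N
      < ∑ k ∈ Finset.range N,
        L / 2 * ∑ i : Fin p, ‖iter k i i - iter k ((i : ℕ) + 1) i‖ ^ 2 := by
    refine Finset.sum_lt_sum_of_nonempty (Finset.nonempty_range_iff.2 hN.ne') ?_
    intro k hk
    have := hcon k (Finset.mem_range.1 hk)
    simp only [norm_smul, mul_pow, Real.norm_eq_abs, sq_abs] at this
    rw [← Finset.mul_sum, hD2] at this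
    have h2 := mul_lt_mul_of_pos_left this (show 0 < α ^ 2 / (2 * L) by positivity)
    have e1 : ∀ G : ℝ, α ^ 2 / (2 * L) * (2 * (G / L) * L ^ 2 / (N * α ^ 2)) = G / N := by
      intro G; field_simp
    have e2 : ∀ S : ℝ, α ^ 2 / (2 * L) * ((L / α) ^ 2 * S) = L / 2 * S := by
      intro S; field_simp
    rwa [e1, e2] at h2
  rw [Finset.sum_const, Finset.card_range, nsmul_eq_mul, mul_div_cancel₀ _ hNpos.ne'] at hlow
  linarith
end

section
/- Let n, m ≥ 1, z = min(n, m), and let r be an integer with 2 ≤ r ≤ z. Let C ∈ ℝ^{n×m}, a ∈ Δ_n, b ∈ Δ_m. Let Π_{a,b} be the set of couplings of a and b, and let Π_{a,b}(r) ⊆ Π_{a,b} be the subset of couplings of nonnegative rank at most r. Then 0 ≤ inf_{P ∈ Π_{a,b}(r)} ⟨C, P⟩_F − inf_{P ∈ Π_{a,b}} ⟨C, P⟩_F ≤ (max_{p,q} C_{pq} − min_{p,q} C_{pq}) · log(z/(r−1)), where log is the natural logarithm. -/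
open Matrix

/-- Frobenius inner product `⟨C, P⟩_F`. -/
def frob {n m : ℕ} (C P : Matrix (Fin n) (Fin m) ℝ) : ℝ := ∑ i, ∑ j, C i j * P i j

/-- The set `Π_{a,b}` of couplings of `a` and `b`. -/
def couplings {n m : ℕ} (a : Fin n → ℝ) (b : Fin m → ℝ) : Set (Matrix (Fin n) (Fin m) ℝ) :=
  {P | (∀ i j, 0 ≤ P i j) ∧ (∀ i, ∑ j, P i j = a i) ∧ (∀ j, ∑ i, P i j = b j)}

/-- `P` has nonnegative rank at most `r`. -/
def hasNNRankLE {n m : ℕ} (r : ℕ) (P : Matrix (Fin n) (Fin m) ℝ) : Prop :=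
  ∃ (u : Fin r → Fin n → ℝ) (v : Fin r → Fin m → ℝ),
    (∀ k i, 0 ≤ u k i) ∧ (∀ k j, 0 ≤ v k j) ∧ ∀ i j, P i j = ∑ k, u k i * v k j

theorem aux_top {n : ℕ} (a : Fin n → ℝ) (d : ℕ) : ∀ k : ℕ, k + d = n →
    ∃ T : Finset (Fin n), T.card = k ∧ (k : ℝ) * ∑ i, a i ≤ n * ∑ i ∈ T, a i := by
  induction d with
  | zero =>
    intro k hk
    refine ⟨Finset.univ, by simp; omega, ?_⟩
    have : k = n := by omega
    rw [this]
  | succ d ih =>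
    intro k hk
    obtain ⟨T, hT, h⟩ := ih (k + 1) (by omega)
    have hne : T.Nonempty := by
      rw [← Finset.card_pos]; omega
    obtain ⟨x, hx, hmin⟩ := Finset.exists_min_image T a hne
    refine ⟨T.erase x, by rw [Finset.card_erase_of_mem hx]; omega, ?_⟩
    have h1 : ∑ i ∈ T.erase x, a i + a x = ∑ i ∈ T, a i := Finset.sum_erase_add T a hx
    have h2 : (k : ℝ) * a x ≤ ∑ i ∈ T.erase x, a i := by
      have := Finset.card_nsmul_le_sum (T.erase x) a (a x)
        (fun i hi => hmin i (Finset.mem_of_mem_erase hi))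
      rw [Finset.card_erase_of_mem hx, hT] at this
      simpa using this
    push_cast at h
    rw [← h1] at h
    set E := ∑ i ∈ T.erase x, a i
    set A := ∑ i, a i
    have hk0 : (0 : ℝ) < (k : ℝ) + 1 := by positivity
    have hn0 : (0 : ℝ) ≤ (n : ℝ) := by positivity
    have hkk : (0 : ℝ) ≤ (k : ℝ) := by positivity
    have h3 := mul_le_mul_of_nonneg_left h hkk
    have h4 := mul_le_mul_of_nonneg_left h2 hn0
    have : ((k : ℝ) + 1) * (k * A) ≤ (k + 1) * (n * E) := by nlinarith
    exact le_of_mul_le_mul_left this hk0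

theorem aux_row {n m : ℕ} (s : ℕ) (hs : s ≤ n) (hn : 0 < n)
    (C : Matrix (Fin n) (Fin m) ℝ) (a : Fin n → ℝ) (b : Fin m → ℝ)
    (ha1 : ∑ i, a i = 1) (c1 c0 : ℝ)
    (h1 : ∀ i j, C i j ≤ c1) (h0 : ∀ i j, c0 ≤ C i j) (h01 : c0 ≤ c1)
    (P : Matrix (Fin n) (Fin m) ℝ) (hP : P ∈ couplings a b) :
    ∃ Q ∈ couplings a b, hasNNRankLE (s + 1) Q ∧
      frob C Q - frob C P ≤ (c1 - c0) * (1 - s / n) := by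
  obtain ⟨hP0, hPa, hPb⟩ := hP
  obtain ⟨S, hS, hSa⟩ := aux_top a (n - s) s (by omega)
  have ha0 : ∀ i, 0 ≤ a i := fun i => by
    rw [← hPa i]; exact Finset.sum_nonneg fun j _ => hP0 i j
  set M : ℝ := ∑ i ∈ Sᶜ, a i with hM
  have hSM : ∑ i ∈ S, a i + M = 1 := by rw [← ha1]; exact Finset.sum_add_sum_compl S a
  have hM0 : 0 ≤ M := Finset.sum_nonneg fun i _ => ha0 i
  set β : Fin m → ℝ := fun j => ∑ i ∈ Sᶜ, P i j with hβ
  have hβ0 : ∀ j, 0 ≤ β j := fun j => Finset.sum_nonneg fun i _ => hP0 i j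
  have hβM : ∑ j, β j = M := by
    simp only [hβ, hM]
    rw [Finset.sum_comm]
    exact Finset.sum_congr rfl fun i _ => hPa i
  have hMa : M = 0 → ∀ i, i ∉ S → a i = 0 := fun h i hi =>
    (Finset.sum_eq_zero_iff_of_nonneg (fun i _ => ha0 i)).1 h i (by simpa using hi)
  have hMβ : M = 0 → ∀ j, β j = 0 := fun h j =>
    (Finset.sum_eq_zero_iff_of_nonneg (fun i _ => hβ0 i)).1 (hβM.trans h) j (by simp)
  set Q : Matrix (Fin n) (Fin m) ℝ := fun i j => if i ∈ S then P i j else a i / M * β j with hQ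
  have hQS : ∀ i j, i ∈ S → Q i j = P i j := fun i j h => by simp [hQ, h]
  have hQN : ∀ i j, i ∉ S → Q i j = a i / M * β j := fun i j h => by simp [hQ, h]
  have hQ0 : ∀ i j, 0 ≤ Q i j := fun i j => by
    by_cases h : i ∈ S
    · rw [hQS i j h]; exact hP0 i j
    · rw [hQN i j h]; exact mul_nonneg (div_nonneg (ha0 i) hM0) (hβ0 j)
  have hQa : ∀ i, ∑ j, Q i j = a i := fun i => by
    by_cases h : i ∈ S
    · rw [Finset.sum_congr rfl fun j _ => hQS i j h]; exact hPa i
    · rw [Finset.sum_congr rfl fun j _ => hQN i j h, ← Finset.mul_sum, hβM]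
      by_cases hz : M = 0
      · rw [hMa hz i h]; simp
      · field_simp
  have hQb : ∀ j, ∑ i, Q i j = b j := fun j => by
    rw [← hPb j, ← Finset.sum_add_sum_compl S, ← Finset.sum_add_sum_compl S (fun i => P i j)]
    congr 1
    · exact Finset.sum_congr rfl fun i hi => hQS i j hi
    · rw [Finset.sum_congr rfl fun i hi => hQN i j (by simpa using hi), ← Finset.sum_mul,
        ← Finset.sum_div]
      change M / M * β j = β j
      by_cases hz : M = 0
      · rw [hMβ hz j]; simp
      · field_simp
  refine ⟨Q, ⟨hQ0, hQa, hQb⟩, ?_, ?_⟩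
  · let e : Fin s ≃ S := (S.equivFinOfCardEq hS).symm
    refine ⟨Fin.cons (fun i => if i ∈ S then 0 else a i / M)
        (fun k i => if i = (e k : Fin n) then 1 else 0),
      Fin.cons β (fun k j => P (e k) j), ?_, ?_, ?_⟩
    · intro k i
      refine Fin.cases ?_ (fun k => ?_) k
      · simp only [Fin.cons_zero]
        split_ifs
        · exact le_rfl
        · exact div_nonneg (ha0 i) hM0
      · simp only [Fin.cons_succ]
        split_ifs <;> norm_num
    · intro k j
      refine Fin.cases ?_ (fun k => ?_) k
      · simpa using hβ0 j
      · simpa using hP0 _ j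
    · intro i j
      rw [Fin.sum_univ_succ]
      simp only [Fin.cons_zero, Fin.cons_succ]
      rw [Equiv.sum_comp e (fun x : S => (if i = (x : Fin n) then (1 : ℝ) else 0) * P x j),
        Finset.sum_coe_sort S (fun x => (if i = x then (1 : ℝ) else 0) * P x j)]
      simp only [ite_mul, one_mul, zero_mul, Finset.sum_ite_eq, hQ]
      split_ifs <;> simp
  · have hrow : ∀ i, ∑ j, C i j * Q i j - ∑ j, C i j * P i j
        ≤ if i ∈ Sᶜ then (c1 - c0) * a i else 0 := fun i => by
      by_cases h : i ∈ S
      · rw [Finset.sum_congr rfl fun j _ => by rw [hQS i j h]]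
        simp [h]
      · have e1 : ∑ j, C i j * Q i j ≤ c1 * a i := by
          rw [← hQa i, Finset.mul_sum]
          exact Finset.sum_le_sum fun j _ => mul_le_mul_of_nonneg_right (h1 i j) (hQ0 i j)
        have e2 : c0 * a i ≤ ∑ j, C i j * P i j := by
          rw [← hPa i, Finset.mul_sum]
          exact Finset.sum_le_sum fun j _ => mul_le_mul_of_nonneg_right (h0 i j) (hP0 i j)
        simp only [Finset.mem_compl, h, not_false_eq_true, if_true]
        linarith
    unfold frob
    rw [← Finset.sum_sub_distrib]
    refine (Finset.sum_le_sum fun i _ => hrow i).trans ?_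
    rw [Finset.sum_ite_mem, Finset.univ_inter, ← Finset.mul_sum]
    refine mul_le_mul_of_nonneg_left ?_ (by linarith)
    change M ≤ _
    have hn' : (0 : ℝ) < n := by exact_mod_cast hn
    rw [ha1, mul_one] at hSa
    have : (s : ℝ) / n ≤ ∑ i ∈ S, a i := by
      rw [div_le_iff₀ hn']; linarith
    linarith

theorem frob_tr {n m : ℕ} (C P : Matrix (Fin n) (Fin m) ℝ) : frob Cᵀ Pᵀ = frob C P := by
  unfold frob
  rw [Finset.sum_comm]
  rfl

theorem coup_tr {n m : ℕ} {a : Fin n → ℝ} {b : Fin m → ℝ} {P : Matrix (Fin n) (Fin m) ℝ}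
    (h : P ∈ couplings a b) : Pᵀ ∈ couplings b a :=
  ⟨fun i j => h.1 j i, h.2.2, h.2.1⟩

theorem rank_tr {n m r : ℕ} {P : Matrix (Fin n) (Fin m) ℝ}
    (h : hasNNRankLE r P) : hasNNRankLE r Pᵀ := by
  obtain ⟨u, v, hu, hv, h⟩ := h
  refine ⟨v, u, hv, hu, fun i j => ?_⟩
  rw [Matrix.transpose_apply, h]
  exact Finset.sum_congr rfl fun k _ => mul_comm _ _

theorem aux_log (s z : ℝ) (hs : 0 < s) (hz : 0 < z) : 1 - s / z ≤ Real.log (z / s) := by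
  have := Real.one_sub_inv_le_log_of_pos (div_pos hz hs)
  rwa [inv_div] at this

theorem stmt2 {n m : ℕ} (hn : 0 < n) (hm : 0 < m) (r : ℕ)
    (hr2 : 2 ≤ r) (hrz : r ≤ min n m)
    (C : Matrix (Fin n) (Fin m) ℝ) (a : Fin n → ℝ) (b : Fin m → ℝ)
    (ha0 : ∀ i, 0 ≤ a i) (ha1 : ∑ i, a i = 1)
    (hb0 : ∀ j, 0 ≤ b j) (hb1 : ∑ j, b j = 1)
    (Cmax Cmin : ℝ)
    (hCmax : IsGreatest {t : ℝ | ∃ p q, C p q = t} Cmax)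
    (hCmin : IsLeast {t : ℝ | ∃ p q, C p q = t} Cmin) :
    0 ≤ sInf (frob C '' {P ∈ couplings a b | hasNNRankLE r P})
        - sInf (frob C '' couplings a b)
    ∧ sInf (frob C '' {P ∈ couplings a b | hasNNRankLE r P})
        - sInf (frob C '' couplings a b)
      ≤ (Cmax - Cmin) * Real.log ((min n m : ℝ) / ((r : ℝ) - 1)) := by
  obtain ⟨s, rfl⟩ : ∃ s, r = s + 1 := ⟨r - 1, by omega⟩
  have hsn : s ≤ n := by omega
  have hsm : s ≤ m := by omega
  have hs0 : (0 : ℝ) < s := by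
    have : 0 < s := by omega
    exact_mod_cast this
  have hn0 : (0 : ℝ) < n := by exact_mod_cast hn
  have hm0 : (0 : ℝ) < m := by exact_mod_cast hm
  have h1 : ∀ i j, C i j ≤ Cmax := fun i j => hCmax.2 ⟨i, j, rfl⟩
  have h0 : ∀ i j, Cmin ≤ C i j := fun i j => hCmin.2 ⟨i, j, rfl⟩
  have h01 : Cmin ≤ Cmax := (h0 ⟨0, hn⟩ ⟨0, hm⟩).trans (h1 _ _)
  have key : ∀ P ∈ couplings a b, ∃ Q ∈ couplings a b, hasNNRankLE (s + 1) Q ∧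
      frob C Q - frob C P ≤
        (Cmax - Cmin) * Real.log ((min n m : ℝ) / (((s + 1 : ℕ) : ℝ) - 1)) := by
    intro P hP
    have hs1 : (((s + 1 : ℕ) : ℝ) - 1) = s := by push_cast; ring
    rw [hs1]
    rcases le_total n m with hnm | hnm
    · obtain ⟨Q, hQ, hr, hc⟩ := aux_row s hsn hn C a b ha1 Cmax Cmin h1 h0 h01 P hP
      refine ⟨Q, hQ, hr, hc.trans ?_⟩
      rw [min_eq_left (by exact_mod_cast hnm)]
      exact mul_le_mul_of_nonneg_left (aux_log s n hs0 hn0) (by linarith)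
    · obtain ⟨Q, hQ, hr, hc⟩ := aux_row s hsm hm Cᵀ b a hb1 Cmax Cmin
        (fun i j => h1 j i) (fun i j => h0 j i) h01 Pᵀ (coup_tr hP)
      refine ⟨Qᵀ, coup_tr hQ, rank_tr hr, ?_⟩
      rw [← frob_tr C Qᵀ, ← frob_tr C P, Matrix.transpose_transpose]
      refine hc.trans ?_
      rw [min_eq_right (by exact_mod_cast hnm)]
      exact mul_le_mul_of_nonneg_left (aux_log s m hs0 hm0) (by linarith)
  have hne : (couplings a b).Nonempty := by
    refine ⟨fun i j => a i * b j, fun i j => mul_nonneg (ha0 i) (hb0 j), fun i => ?_, fun j => ?_⟩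
    · rw [← Finset.mul_sum, hb1, mul_one]
    · rw [← Finset.sum_mul, ha1, one_mul]
  have hbd : BddBelow (frob C '' couplings a b) := by
    refine ⟨Cmin, ?_⟩
    rintro _ ⟨P, hP, rfl⟩
    have : Cmin = ∑ i, ∑ j, Cmin * P i j := by
      simp_rw [← Finset.mul_sum, hP.2.1, ha1, mul_one]
    rw [this]
    exact Finset.sum_le_sum fun i _ => Finset.sum_le_sum fun j _ =>
      mul_le_mul_of_nonneg_right (h0 i j) (hP.1 i j)
  have hsub : frob C '' {P ∈ couplings a b | hasNNRankLE (s + 1) P} ⊆ frob C '' couplings a b :=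
    Set.image_mono fun P hP => hP.1
  have hne' : (frob C '' {P ∈ couplings a b | hasNNRankLE (s + 1) P}).Nonempty := by
    obtain ⟨P, hP⟩ := hne
    obtain ⟨Q, hQ, hr, -⟩ := key P hP
    exact ⟨_, Q, ⟨hQ, hr⟩, rfl⟩
  constructor
  · exact sub_nonneg.2 (csInf_le_csInf hbd hne' hsub)
  · rw [sub_le_comm]
    refine le_csInf (hne.image _) ?_
    rintro _ ⟨P, hP, rfl⟩
    obtain ⟨Q, hQ, hr, hc⟩ := key P hP
    have := csInf_le (hbd.mono hsub) ⟨Q, ⟨hQ, hr⟩, rfl⟩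
    linarith
end

section
/- Let C ∈ ℝ^{n×m}, let z ≥ 1 and let r be an integer with 2 ≤ r ≤ z. Let b ∈ ℝ^m be entrywise nonnegative with c_b = Σ_{j=1}^m b_j > 0. Suppose P ∈ ℝ^{n×m} satisfies Pᵀ 1_n = b and admits a decomposition P = Σ_{k=1}^z λ_k q_k r_kᵀ, where λ_1 ≥ λ_2 ≥ ⋯ ≥ λ_z ≥ 0 and each q_k ∈ ℝ^n, r_k ∈ ℝ^m is entrywise nonnegative with Σ_i (q_k)_i = 1 and Σ_j (r_k)_j = 1. Then there exists a matrix P̃ ∈ ℝ^{n×m} that is a sum of at most r rank-one products u vᵀ of entrywise-nonnegative vectors, such that P̃ᵀ 1_n = b, P̃ 1_m = P 1_m, and ⟨C, P̃⟩_F − ⟨C, P⟩_F ≤ c_b · (max_{p,q} C_{pq} − min_{p,q} C_{pq}) · log(z/(r−1)). Explicitly, when s = Σ_{i=r}^z λ_i > 0 one may take P̃ = Σ_{i=1}^{r−1} λ_i q_i r_iᵀ + s · α_r β_rᵀ with α_r = (1/s) Σ_{i=r}^z λ_i q_i and β_r = (1/s) Σ_{i=r}^z λ_i r_i. -/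
open Matrix

/-- The properties required of the rank-`r` approximation `P̃` of `P`:
it is a sum of at most `r` nonnegative rank-one products, has right marginal `b`,
the same left marginal as `P`, and satisfies the cost bound. -/
def goodApprox {n m : ℕ} (r : ℕ) (C P : Matrix (Fin n) (Fin m) ℝ) (b : Fin m → ℝ)
    (bound : ℝ) (Pt : Matrix (Fin n) (Fin m) ℝ) : Prop :=
  (∃ (u : Fin r → Fin n → ℝ) (v : Fin r → Fin m → ℝ),
      (∀ k i, 0 ≤ u k i) ∧ (∀ k j, 0 ≤ v k j) ∧ ∀ i j, Pt i j = ∑ k, u k i * v k j) ∧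
  (∀ j, ∑ i, Pt i j = b j) ∧
  (∀ i, ∑ j, Pt i j = ∑ j, P i j) ∧
  frob C Pt - frob C P ≤ bound

lemma aux_tail (t w : ℕ) (hw : 1 ≤ w) (lam : Fin (t + w) → ℝ)
    (hm : ∀ k l : Fin (t + w), k ≤ l → lam l ≤ lam k) :
    (t : ℝ) * ∑ k : Fin w, lam (Fin.natAdd t k) ≤ w * ∑ k : Fin t, lam (Fin.castAdd w k) := by
  set x := lam (Fin.natAdd t ⟨0, hw⟩) with hx
  have h1 : ∑ k : Fin w, lam (Fin.natAdd t k) ≤ w * x := by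
    have := Finset.sum_le_card_nsmul Finset.univ (fun k : Fin w => lam (Fin.natAdd t k)) x
      (fun k _ => hm _ _ (by simp [Fin.le_def]))
    simpa using this
  have h2 : t * x ≤ ∑ k : Fin t, lam (Fin.castAdd w k) := by
    have := Finset.card_nsmul_le_sum Finset.univ (fun k : Fin t => lam (Fin.castAdd w k)) x
      (fun k _ => hm _ _ (by simp [Fin.le_def]))
    simpa using this
  have := mul_le_mul_of_nonneg_left h1 (Nat.cast_nonneg (α := ℝ) t)
  have := mul_le_mul_of_nonneg_left h2 (Nat.cast_nonneg (α := ℝ) w)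
  nlinarith

lemma aux_sum_tail (t w : ℕ) (f : Fin (t + w) → ℝ) :
    ∑ k ∈ Finset.univ.filter (fun k : Fin (t + w) => t ≤ (k : ℕ)), f k
      = ∑ k : Fin w, f (Fin.natAdd t k) := by
  rw [Finset.sum_filter, Fin.sum_univ_add]
  simp
  exact Finset.sum_eq_zero fun x _ => if_neg (by have := x.2; omega)

lemma aux_sum_head (t w : ℕ) (f : Fin (t + w) → ℝ) :
    ∑ k ∈ Finset.univ.filter (fun k : Fin (t + w) => (k : ℕ) < t), f k
      = ∑ k : Fin t, f (Fin.castAdd w k) := by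
  rw [Finset.sum_filter, Fin.sum_univ_add]
  simp

/-- Low-rank approximation with a marginal constraint. Under the stated
decomposition hypotheses there is a rank-`r` nonnegative approximation `P̃` of `P` with
`P̃ᵀ 1 = b`, `P̃ 1 = P 1` and
`⟨C,P̃⟩ − ⟨C,P⟩ ≤ c_b (max C − min C) log (z/(r−1))`; when `s = Σ_{i=r}^z λ_i > 0` the
explicit matrix `Σ_{i<r-1} λ_i q_i r_iᵀ + s α_r β_rᵀ` works. -/
theorem stmt3 {n m : ℕ} (z r : ℕ) (hz : 1 ≤ z) (hr2 : 2 ≤ r) (hrz : r ≤ z)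
    (C : Matrix (Fin n) (Fin m) ℝ)
    (b : Fin m → ℝ) (hb : ∀ j, 0 ≤ b j)
    (cb : ℝ) (hcb : cb = ∑ j, b j) (hcbpos : 0 < cb)
    (Cmax Cmin : ℝ)
    (hCmax : IsGreatest {t : ℝ | ∃ p q, C p q = t} Cmax)
    (hCmin : IsLeast {t : ℝ | ∃ p q, C p q = t} Cmin)
    (P : Matrix (Fin n) (Fin m) ℝ) (hPb : ∀ j, ∑ i, P i j = b j)
    (lam : Fin z → ℝ) (q : Fin z → Fin n → ℝ) (rv : Fin z → Fin m → ℝ)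
    (hlam_mono : ∀ k l : Fin z, k ≤ l → lam l ≤ lam k)
    (hlam_nonneg : ∀ k, 0 ≤ lam k)
    (hq0 : ∀ k i, 0 ≤ q k i) (hrv0 : ∀ k j, 0 ≤ rv k j)
    (hq1 : ∀ k, ∑ i, q k i = 1) (hrv1 : ∀ k, ∑ j, rv k j = 1)
    (hP : ∀ i j, P i j = ∑ k, lam k * q k i * rv k j) :
    (∃ Pt : Matrix (Fin n) (Fin m) ℝ,
      goodApprox r C P b
        (cb * (Cmax - Cmin) * Real.log ((z : ℝ) / ((r : ℝ) - 1))) Pt) ∧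
    (0 < ∑ k ∈ Finset.univ.filter (fun k : Fin z => r - 1 ≤ (k : ℕ)), lam k →
      goodApprox r C P b
        (cb * (Cmax - Cmin) * Real.log ((z : ℝ) / ((r : ℝ) - 1)))
        (Matrix.of fun i j =>
          (∑ k ∈ Finset.univ.filter (fun k : Fin z => (k : ℕ) < r - 1),
              lam k * q k i * rv k j)
          + (∑ k ∈ Finset.univ.filter (fun k : Fin z => r - 1 ≤ (k : ℕ)), lam k) *
            (((∑ k ∈ Finset.univ.filter (fun k : Fin z => r - 1 ≤ (k : ℕ)), lam k)⁻¹ *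
                ∑ k ∈ Finset.univ.filter (fun k : Fin z => r - 1 ≤ (k : ℕ)), lam k * q k i) *
             ((∑ k ∈ Finset.univ.filter (fun k : Fin z => r - 1 ≤ (k : ℕ)), lam k)⁻¹ *
                ∑ k ∈ Finset.univ.filter (fun k : Fin z => r - 1 ≤ (k : ℕ)), lam k * rv k j)))) := by
  refine (fun h => ⟨⟨_, h⟩, fun _ => h⟩ : goodApprox r C P b _ _ → _) ?_
  obtain ⟨t, rfl⟩ : ∃ t, r = t + 1 := ⟨r - 1, by omega⟩
  obtain ⟨w, rfl⟩ : ∃ w, z = t + w := ⟨z - t, by omega⟩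
  have ht : 1 ≤ t := by omega
  have hw : 1 ≤ w := by omega
  simp only [Nat.add_sub_cancel, aux_sum_tail, aux_sum_head]
  have htail := aux_tail t w hw lam hlam_mono
  set s := ∑ k : Fin w, lam (Fin.natAdd t k) with hs
  set H := ∑ k : Fin t, lam (Fin.castAdd w k) with hH
  set A : Fin n → ℝ := fun i => ∑ k : Fin w, lam (Fin.natAdd t k) * q (Fin.natAdd t k) i with hA
  set B : Fin m → ℝ := fun j => ∑ k : Fin w, lam (Fin.natAdd t k) * rv (Fin.natAdd t k) j with hB
  have hs0 : 0 ≤ s := Finset.sum_nonneg fun k _ => hlam_nonneg _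
  have hA0 : ∀ i, 0 ≤ A i := fun i =>
    Finset.sum_nonneg fun k _ => mul_nonneg (hlam_nonneg _) (hq0 _ _)
  have hB0 : ∀ j, 0 ≤ B j := fun j =>
    Finset.sum_nonneg fun k _ => mul_nonneg (hlam_nonneg _) (hrv0 _ _)
  have hAs : ∑ i, A i = s := by
    simp only [hA]
    rw [Finset.sum_comm]
    simp only [← Finset.mul_sum, hq1, mul_one, hs]
  have hBs : ∑ j, B j = s := by
    simp only [hB]
    rw [Finset.sum_comm]
    simp only [← Finset.mul_sum, hrv1, mul_one, hs]
  set T : Fin n → Fin m → ℝ := fun i j =>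
    ∑ k : Fin w, lam (Fin.natAdd t k) * q (Fin.natAdd t k) i * rv (Fin.natAdd t k) j with hT
  have hT0 : ∀ i j, 0 ≤ T i j := fun i j =>
    Finset.sum_nonneg fun k _ => mul_nonneg (mul_nonneg (hlam_nonneg _) (hq0 _ _)) (hrv0 _ _)
  have hTi : ∀ j, ∑ i, T i j = B j := by
    intro j
    simp only [hT, hB]
    rw [Finset.sum_comm]
    simp only [← Finset.mul_sum, ← Finset.sum_mul, hq1, mul_one]
  have hTj : ∀ i, ∑ j, T i j = A i := by
    intro i
    simp only [hT, hA]
    rw [Finset.sum_comm]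
    simp only [← Finset.mul_sum, hrv1, mul_one]
  set G : Fin n → Fin m → ℝ := fun i j =>
    ∑ k : Fin t, lam (Fin.castAdd w k) * q (Fin.castAdd w k) i * rv (Fin.castAdd w k) j with hG
  have hPG : ∀ i j, P i j = G i j + T i j := by
    intro i j
    rw [hP, Fin.sum_univ_add]
  set U : Fin n → Fin m → ℝ := fun i j => s * ((s⁻¹ * A i) * (s⁻¹ * B j)) with hU
  have hU0 : ∀ i j, 0 ≤ U i j := fun i j =>
    mul_nonneg hs0 (mul_nonneg (mul_nonneg (inv_nonneg.2 hs0) (hA0 i))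
      (mul_nonneg (inv_nonneg.2 hs0) (hB0 j)))
  have hUi : ∀ j, ∑ i, U i j = B j := by
    intro j
    simp only [hU]
    rw [← Finset.mul_sum, ← Finset.sum_mul, ← Finset.mul_sum, hAs]
    rcases eq_or_ne s 0 with h | h
    · rw [h] at hBs
      have := (Finset.sum_eq_zero_iff_of_nonneg (fun j _ => hB0 j)).1 hBs j (Finset.mem_univ _)
      rw [h, this]; simp
    · field_simp
  have hUj : ∀ i, ∑ j, U i j = A i := by
    intro i
    simp only [hU]
    rw [← Finset.mul_sum, ← Finset.mul_sum, ← Finset.mul_sum, hBs]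
    rcases eq_or_ne s 0 with h | h
    · rw [h] at hAs
      have := (Finset.sum_eq_zero_iff_of_nonneg (fun j _ => hA0 j)).1 hAs i (Finset.mem_univ _)
      rw [h, this]; simp
    · field_simp
  have hUG : ∀ i j, (Matrix.of fun i j => G i j + U i j) i j = G i j + U i j := fun _ _ => rfl
  have hcbs : cb = H + s := by
    rw [hcb, ← hBs, hH, ← Finset.sum_congr rfl (fun j _ => hPb j)]
    simp only [hPG, Finset.sum_add_distrib, hTi]
    congr 1
    have h1 : ∀ j, ∑ i, G i j = ∑ k : Fin t, lam (Fin.castAdd w k) * rv (Fin.castAdd w k) j := by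
      intro j
      simp only [hG]
      rw [Finset.sum_comm]
      simp only [← Finset.mul_sum, ← Finset.sum_mul, hq1, mul_one]
    simp only [h1]
    rw [Finset.sum_comm]
    simp only [← Finset.mul_sum, hrv1, mul_one]
  change goodApprox (t + 1) C P b _ (Matrix.of fun i j => G i j + U i j)
  refine ⟨⟨Fin.snoc (α := fun _ => Fin n → ℝ) (fun k i => lam (Fin.castAdd w k) * q (Fin.castAdd w k) i) A,
    Fin.snoc (α := fun _ => Fin m → ℝ) (fun k => rv (Fin.castAdd w k)) (fun j => s⁻¹ * B j), ?_, ?_, ?_⟩, ?_, ?_, ?_⟩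
  · intro k
    refine Fin.lastCases ?_ (fun k => ?_) k
    · simpa using hA0
    · intro i
      simpa using mul_nonneg (hlam_nonneg _) (hq0 _ _)
  · intro k
    refine Fin.lastCases ?_ (fun k => ?_) k
    · intro j
      simpa using mul_nonneg (inv_nonneg.2 hs0) (hB0 j)
    · intro j
      simpa using hrv0 _ _
  · intro i j
    rw [hUG, Fin.sum_univ_castSucc]
    simp only [Fin.snoc_castSucc, Fin.snoc_last]
    congr 1
    simp only [hU]
    rcases eq_or_ne s 0 with h | h
    · simp [h]
    · field_simp
  · intro j
    rw [← hPb j]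
    simp only [hUG, hPG, Finset.sum_add_distrib, hUi, hTi]
  · intro i
    simp only [hUG, hPG, Finset.sum_add_distrib, hUj, hTj]
  · have hmax : ∀ i j, C i j ≤ Cmax := fun i j => hCmax.2 ⟨i, j, rfl⟩
    have hmin : ∀ i j, Cmin ≤ C i j := fun i j => hCmin.2 ⟨i, j, rfl⟩
    have hMm : 0 ≤ Cmax - Cmin := by
      obtain ⟨p, q', h⟩ := hCmax.1
      have := hmin p q'
      linarith
    have e1 : ∑ i, ∑ j, C i j * U i j ≤ Cmax * s := by
      calc ∑ i, ∑ j, C i j * U i j ≤ ∑ i, ∑ j, Cmax * U i j :=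
            Finset.sum_le_sum fun i _ => Finset.sum_le_sum fun j _ =>
              mul_le_mul_of_nonneg_right (hmax i j) (hU0 i j)
        _ = Cmax * s := by simp only [← Finset.mul_sum, hUj, hAs]
    have e2 : Cmin * s ≤ ∑ i, ∑ j, C i j * T i j := by
      calc Cmin * s = ∑ i, ∑ j, Cmin * T i j := by simp only [← Finset.mul_sum, hTj, hAs]
        _ ≤ _ := Finset.sum_le_sum fun i _ => Finset.sum_le_sum fun j _ =>
              mul_le_mul_of_nonneg_right (hmin i j) (hT0 i j)
    have e3 : frob C (Matrix.of fun i j => G i j + U i j) - frob C P ≤ s * (Cmax - Cmin) := by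
      simp only [frob, hUG, hPG, mul_add, Finset.sum_add_distrib]
      linarith
    have ht' : (0 : ℝ) < t := by exact_mod_cast ht
    have hw' : (0 : ℝ) < w := by exact_mod_cast hw
    have hlog := Real.one_sub_inv_le_log_of_pos (x := ((t : ℝ) + w) / t) (by positivity)
    have e4 : s ≤ cb * Real.log (((t : ℝ) + w) / t) := by
      refine le_trans ?_ (mul_le_mul_of_nonneg_left hlog hcbpos.le)
      have : 1 - (((t : ℝ) + w) / t)⁻¹ = w / (t + w) := by
        field_simp; ring
      rw [this, ← mul_div_assoc, le_div_iff₀ (by positivity), hcbs]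
      nlinarith
    have e5 := mul_le_mul_of_nonneg_right e4 hMm
    push_cast
    rw [add_sub_cancel_right]
    linarith
end

section
/- Let a ∈ Δ_n, and let Q ∈ ℝ^{n×r_1}, R ∈ ℝ^{m×r_2}, T ∈ ℝ^{r_1×r_2} be entrywise nonnegative with Q 1_{r_1} = a, g_Q := Qᵀ 1_n and g_R := Rᵀ 1_m entrywise positive, T 1_{r_2} = g_Q, and Tᵀ 1_{r_1} = g_R. Define Q' = Q diag(1/g_Q) T. Then Q' is entrywise nonnegative, Q' 1_{r_2} = a, (Q')ᵀ 1_n = g_R, and Q diag(1/g_Q) T diag(1/g_R) Rᵀ = Q' diag(1/g_R) Rᵀ. Hence every latent-coupling factorization can be converted into a factorization of the form Q' diag(1/g_R) Rᵀ in which both factors Q' and R have inner marginal g_R. -/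
open Matrix

/-- Diagonalization of the latent coupling: with `Q' = Q diag(1/g_Q) T`,
the matrix `Q'` is entrywise nonnegative, `Q' 1 = a`, `(Q')ᵀ 1 = g_R`, and the
latent-coupling product equals `Q' diag(1/g_R) Rᵀ`. -/
theorem stmt11 {n m r₁ r₂ : ℕ} (a : Fin n → ℝ)
    (ha0 : ∀ i, 0 ≤ a i) (ha1 : ∑ i, a i = 1)
    (Q : Matrix (Fin n) (Fin r₁) ℝ) (R : Matrix (Fin m) (Fin r₂) ℝ)
    (T : Matrix (Fin r₁) (Fin r₂) ℝ)
    (hQ0 : ∀ i k, 0 ≤ Q i k) (hR0 : ∀ j l, 0 ≤ R j l) (hT0 : ∀ k l, 0 ≤ T k l)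
    (hQ1 : Q *ᵥ (fun _ => 1) = a)
    (gQ : Fin r₁ → ℝ) (hgQ : gQ = Qᵀ *ᵥ (fun _ => 1))
    (gR : Fin r₂ → ℝ) (hgR : gR = Rᵀ *ᵥ (fun _ => 1))
    (hgQpos : ∀ k, 0 < gQ k) (hgRpos : ∀ l, 0 < gR l)
    (hT1 : T *ᵥ (fun _ => 1) = gQ) (hT2 : Tᵀ *ᵥ (fun _ => 1) = gR) :
    (∀ i l, 0 ≤ (Q * Matrix.diagonal (fun k => (gQ k)⁻¹) * T) i l) ∧
    ((Q * Matrix.diagonal (fun k => (gQ k)⁻¹) * T) *ᵥ (fun _ => 1) = a) ∧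
    ((Q * Matrix.diagonal (fun k => (gQ k)⁻¹) * T)ᵀ *ᵥ (fun _ => 1) = gR) ∧
    (Q * Matrix.diagonal (fun k => (gQ k)⁻¹) * T * Matrix.diagonal (fun l => (gR l)⁻¹) * Rᵀ
      = (Q * Matrix.diagonal (fun k => (gQ k)⁻¹) * T) *
          Matrix.diagonal (fun l => (gR l)⁻¹) * Rᵀ) := by
  have hD : Matrix.diagonal (fun k => (gQ k)⁻¹) *ᵥ gQ = fun _ => (1 : ℝ) := by
    funext k
    rw [Matrix.mulVec_diagonal]
    exact inv_mul_cancel₀ (hgQpos k).ne'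
  refine ⟨?_, ?_, ?_, rfl⟩
  · intro i l
    rw [Matrix.mul_apply]
    refine Finset.sum_nonneg fun k _ => ?_
    rw [Matrix.mul_diagonal]
    exact mul_nonneg (mul_nonneg (hQ0 i k) (inv_nonneg.mpr (hgQpos k).le)) (hT0 k l)
  · rw [← Matrix.mulVec_mulVec, hT1, ← Matrix.mulVec_mulVec, hD, hQ1]
  · rw [Matrix.transpose_mul, Matrix.transpose_mul, Matrix.diagonal_transpose,
      ← Matrix.mulVec_mulVec, ← Matrix.mulVec_mulVec, ← hgQ, hD, hT2]
end

section
/- Let δ > 0, C ∈ ℝ^{n×m}, let R ∈ ℝ^{m×r_2} and T ∈ ℝ^{r_1×r_2} be entrywise nonnegative with Σ_{ij} R_{ij} ≤ 1 and Σ_{ij} T_{ij} ≤ 1, and let g, g̃ ∈ ℝ^{r_1} and g_R ∈ ℝ^{r_2} have all entries at least δ. Then ‖C R (diag(1/g) T diag(1/g_R))ᵀ − C R (diag(1/g̃) T diag(1/g_R))ᵀ‖_F ≤ (‖C‖_F / δ³) · ‖g − g̃‖_2. That is, the linearized mirror-descent gradient C R Xᵀ with X = diag(1/g) T diag(1/g_R)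 is Lipschitz in the inner marginal g with constant ‖C‖_F/δ³ on the region where all inner-marginal entries are bounded below by δ. -/
open Matrix

/-- Lipschitz bound for the linearized mirror-descent gradient
`C R Xᵀ`, `X = diag(1/g) T diag(1/g_R)`, in the inner marginal `g`, with constant
`‖C‖_F / δ³` on the region where all inner-marginal entries are at least `δ`. -/
theorem stmt13 {n m r₁ r₂ : ℕ} (δ : ℝ) (hδ : 0 < δ)
    (C : Matrix (Fin n) (Fin m) ℝ)
    (R : Matrix (Fin m) (Fin r₂) ℝ) (T : Matrix (Fin r₁) (Fin r₂) ℝ)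
    (hR0 : ∀ j l, 0 ≤ R j l) (hT0 : ∀ k l, 0 ≤ T k l)
    (hRsum : ∑ j, ∑ l, R j l ≤ 1) (hTsum : ∑ k, ∑ l, T k l ≤ 1)
    (g g' : Fin r₁ → ℝ) (gR : Fin r₂ → ℝ)
    (hg : ∀ i, δ ≤ g i) (hg' : ∀ i, δ ≤ g' i) (hgR : ∀ j, δ ≤ gR j) :
    Real.sqrt (∑ i, ∑ k,
        ((C * R * (Matrix.diagonal (fun i => (g i)⁻¹) * T *
            Matrix.diagonal (fun j => (gR j)⁻¹))ᵀ) i k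
          - (C * R * (Matrix.diagonal (fun i => (g' i)⁻¹) * T *
            Matrix.diagonal (fun j => (gR j)⁻¹))ᵀ) i k) ^ 2)
      ≤ Real.sqrt (∑ i, ∑ j, C i j ^ 2) / δ ^ 3 *
        Real.sqrt (∑ i, (g i - g' i) ^ 2) := by
  have hTle : ∀ k l, T k l ≤ 1 := by
    intro k l
    calc T k l ≤ ∑ l, T k l :=
          Finset.single_le_sum (f := fun l => T k l) (fun l _ => hT0 k l) (Finset.mem_univ l)
      _ ≤ ∑ k, ∑ l, T k l :=
          Finset.single_le_sum (f := fun k => ∑ l, T k l)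
            (fun k _ => Finset.sum_nonneg fun l _ => hT0 k l) (Finset.mem_univ k)
      _ ≤ 1 := hTsum
  have hρ0 : ∀ j, 0 ≤ ∑ l, R j l := fun j => Finset.sum_nonneg fun l _ => hR0 j l
  have hρ2 : ∑ j, (∑ l, R j l) ^ 2 ≤ 1 := by
    calc ∑ j, (∑ l, R j l) ^ 2 ≤ ∑ j, ∑ l, R j l := by
          refine Finset.sum_le_sum fun j _ => ?_
          have h1 : ∑ l, R j l ≤ 1 := le_trans
            (Finset.single_le_sum (f := fun j => ∑ l, R j l) (fun j _ => hρ0 j)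
              (Finset.mem_univ j)) hRsum
          nlinarith [hρ0 j]
      _ ≤ 1 := hRsum
  let W : Fin m → Fin r₁ → ℝ := fun j k =>
    ∑ l, R j l * (((g k)⁻¹ - (g' k)⁻¹) * T k l * (gR l)⁻¹)
  have hent : ∀ i k, (C * R * (Matrix.diagonal (fun i => (g i)⁻¹) * T *
            Matrix.diagonal (fun j => (gR j)⁻¹))ᵀ) i k
          - (C * R * (Matrix.diagonal (fun i => (g' i)⁻¹) * T *
            Matrix.diagonal (fun j => (gR j)⁻¹))ᵀ) i k = ∑ j, C i j * W j k := by
    intro i k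
    rw [Matrix.mul_assoc C R, Matrix.mul_assoc C R, Matrix.mul_apply, Matrix.mul_apply,
      ← Finset.sum_sub_distrib]
    refine Finset.sum_congr rfl fun j _ => ?_
    rw [← mul_sub, Matrix.mul_apply, Matrix.mul_apply, ← Finset.sum_sub_distrib]
    congr 1
    refine Finset.sum_congr rfl fun l _ => ?_
    simp only [Matrix.transpose_apply, Matrix.mul_diagonal, Matrix.diagonal_mul]
    ring
  have hd : ∀ k, |(g k)⁻¹ - (g' k)⁻¹| ≤ |g k - g' k| / δ ^ 2 := by
    intro k
    have h1 : 0 < g k := hδ.trans_le (hg k)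
    have h2 : 0 < g' k := hδ.trans_le (hg' k)
    rw [inv_sub_inv h1.ne' h2.ne', abs_div, abs_sub_comm, abs_of_pos (mul_pos h1 h2)]
    refine div_le_div_of_nonneg_left (abs_nonneg _) (by positivity) ?_
    rw [sq]
    exact mul_le_mul (hg k) (hg' k) hδ.le h1.le
  have hW : ∀ j k, |W j k| ≤ |g k - g' k| / δ ^ 3 * ∑ l, R j l := by
    intro j k
    refine (Finset.abs_sum_le_sum_abs _ _).trans ?_
    rw [Finset.mul_sum]
    refine Finset.sum_le_sum fun l _ => ?_
    have h3 : 0 < gR l := hδ.trans_le (hgR l)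
    have h4 : (gR l)⁻¹ ≤ δ⁻¹ := inv_anti₀ hδ (hgR l)
    rw [abs_mul, abs_mul, abs_mul, abs_of_nonneg (hR0 j l), abs_of_nonneg (hT0 k l),
      abs_of_pos (inv_pos.2 h3), mul_comm]
    refine mul_le_mul_of_nonneg_right ?_ (hR0 j l)
    calc |(g k)⁻¹ - (g' k)⁻¹| * T k l * (gR l)⁻¹
        ≤ (|g k - g' k| / δ ^ 2) * 1 * δ⁻¹ := by
          have := hd k
          have := hTle k l
          have := hT0 k l
          gcongr
      _ = |g k - g' k| / δ ^ 3 := by field_simp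
  have hW2 : ∀ k, ∑ j, W j k ^ 2 ≤ (g k - g' k) ^ 2 / δ ^ 6 := by
    intro k
    calc ∑ j, W j k ^ 2 ≤ ∑ j, (g k - g' k) ^ 2 / δ ^ 6 * (∑ l, R j l) ^ 2 := by
          refine Finset.sum_le_sum fun j _ => ?_
          have h := pow_le_pow_left₀ (abs_nonneg _) (hW j k) 2
          rw [sq_abs, mul_pow, div_pow, sq_abs, ← pow_mul] at h
          exact h
      _ = (g k - g' k) ^ 2 / δ ^ 6 * ∑ j, (∑ l, R j l) ^ 2 := by rw [Finset.mul_sum]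
      _ ≤ (g k - g' k) ^ 2 / δ ^ 6 * 1 := by gcongr
      _ = _ := mul_one _
  have hC0 : 0 ≤ ∑ i, ∑ j, C i j ^ 2 :=
    Finset.sum_nonneg fun i _ => Finset.sum_nonneg fun j _ => sq_nonneg _
  have hG0 : 0 ≤ ∑ i, (g i - g' i) ^ 2 := Finset.sum_nonneg fun i _ => sq_nonneg _
  apply Real.sqrt_le_iff.2
  refine ⟨by positivity, ?_⟩
  rw [mul_pow, div_pow, Real.sq_sqrt hC0, Real.sq_sqrt hG0, ← pow_mul]
  calc _ = ∑ i, ∑ k, (∑ j, C i j * W j k) ^ 2 := by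
        simp only [hent]
    _ ≤ ∑ i, ∑ k, (∑ j, C i j ^ 2) * ((g k - g' k) ^ 2 / δ ^ 6) := by
        refine Finset.sum_le_sum fun i _ => Finset.sum_le_sum fun k _ => ?_
        refine (Finset.sum_mul_sq_le_sq_mul_sq _ _ _).trans ?_
        exact mul_le_mul_of_nonneg_left (hW2 k) (Finset.sum_nonneg fun j _ => sq_nonneg _)
    _ = (∑ i, ∑ j, C i j ^ 2) * ((∑ k, (g k - g' k) ^ 2) / δ ^ 6) := by
        rw [Finset.sum_div, Finset.sum_mul_sum]
    _ = _ := by ring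
end

section
/- Let A ∈ ℝ^{n×n}, let B ∈ ℝ^{m×m} be symmetric, and let P ∈ ℝ^{n×m}. Then the Gromov–Wasserstein quadratic cost satisfies the matrix identity Σ_{i,j,k,l} (A_{ik} − B_{jl})² P_{ij} P_{kl} = 1_mᵀ Pᵀ A^{⊙2} P 1_m + 1_nᵀ P B^{⊙2} Pᵀ 1_n − 2 ⟨A P B, P⟩_F, where A^{⊙2} and B^{⊙2} denote the entrywise (Hadamard) squares. -/
open Matrix

/-- Matrix form of the Gromov–Wasserstein quadratic cost:
`Σ (A_{ik} − B_{jl})² P_{ij} P_{kl}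
  = 1ᵀ Pᵀ A^{⊙2} P 1 + 1ᵀ P B^{⊙2} Pᵀ 1 − 2 ⟨A P B, P⟩_F` for symmetric `B`. -/
theorem stmt14 {n m : ℕ} (A : Matrix (Fin n) (Fin n) ℝ) (B : Matrix (Fin m) (Fin m) ℝ)
    (hB : B.IsSymm) (P : Matrix (Fin n) (Fin m) ℝ) :
    ∑ i, ∑ j, ∑ k, ∑ l, (A i k - B j l) ^ 2 * (P i j * P k l)
      = (∑ j, ∑ l, (Pᵀ * A.map (fun t => t ^ 2) * P) j l)
        + (∑ i, ∑ k, (P * B.map (fun t => t ^ 2) * Pᵀ) i k)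
        - 2 * ∑ i, ∑ j, (A * P * B) i j * P i j := by
  have h1 : (∑ j, ∑ l, (Pᵀ * A.map (fun t => t ^ 2) * P) j l)
      = ∑ i, ∑ j, ∑ k, ∑ l, A i k ^ 2 * (P i j * P k l) := by
    simp only [Matrix.mul_apply, Matrix.transpose_apply, Matrix.map_apply, Finset.sum_mul]
    rw [Finset.sum_comm (s := (Finset.univ : Finset (Fin n)))]
    refine Finset.sum_congr rfl fun j _ => ?_
    rw [Finset.sum_comm, Finset.sum_comm (s := (Finset.univ : Finset (Fin n)))
      (t := (Finset.univ : Finset (Fin n)))]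
    refine Finset.sum_congr rfl fun k _ => ?_
    rw [Finset.sum_comm]
    refine Finset.sum_congr rfl fun i _ => Finset.sum_congr rfl fun l _ => ?_
    ring
  have h2 : (∑ i, ∑ k, (P * B.map (fun t => t ^ 2) * Pᵀ) i k)
      = ∑ i, ∑ j, ∑ k, ∑ l, B j l ^ 2 * (P i j * P k l) := by
    simp only [Matrix.mul_apply, Matrix.transpose_apply, Matrix.map_apply, Finset.sum_mul]
    refine Finset.sum_congr rfl fun i _ => ?_
    rw [Finset.sum_comm (s := (Finset.univ : Finset (Fin m)))
      (t := (Finset.univ : Finset (Fin n)))]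
    refine Finset.sum_congr rfl fun k _ => ?_
    rw [Finset.sum_comm]
    refine Finset.sum_congr rfl fun j _ => Finset.sum_congr rfl fun l _ => ?_
    ring
  have h3 : (∑ i, ∑ j, (A * P * B) i j * P i j)
      = ∑ i, ∑ j, ∑ k, ∑ l, A i k * B j l * (P i j * P k l) := by
    simp only [Matrix.mul_apply, Finset.sum_mul]
    refine Finset.sum_congr rfl fun i _ => Finset.sum_congr rfl fun j _ => ?_
    rw [Finset.sum_comm]
    refine Finset.sum_congr rfl fun k _ => Finset.sum_congr rfl fun l _ => ?_
    rw [hB.apply j l]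
    ring
  rw [h1, h2, h3]
  simp only [Finset.mul_sum, ← Finset.sum_add_distrib, ← Finset.sum_sub_distrib]
  refine Finset.sum_congr rfl fun i _ => Finset.sum_congr rfl fun j _ =>
    Finset.sum_congr rfl fun k _ => Finset.sum_congr rfl fun l _ => ?_
  ring
end

section
/- Let A ∈ ℝ^{n×n}, let B ∈ ℝ^{m×m} be symmetric, and let Q ∈ ℝ^{n×r_1}, R ∈ ℝ^{m×r_2}, X ∈ ℝ^{r_1×r_2} satisfy X (Rᵀ 1_m) = 1_{r_1} and Xᵀ (Qᵀ 1_n) = 1_{r_2}. Then for P = Q X Rᵀ the Gromov–Wasserstein quadratic cost reduces to Σ_{i,j,k,l} (A_{ik} − B_{jl})² P_{ij} P_{kl} = 1_{r_1}ᵀ Qᵀ A^{⊙2} Q 1_{r_1} + 1_{r_2}ᵀ Rᵀ B^{⊙2} R 1_{r_2} − 2 ⟨Q X Rᵀ, A Q X Rᵀ B⟩_F. -/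
open Matrix

lemma aux_quad {n r : ℕ} (C : Matrix (Fin n) (Fin n) ℝ) (Q : Matrix (Fin n) (Fin r) ℝ) :
    ∑ s, ∑ t, (Qᵀ * C * Q) s t = ∑ i, ∑ k, C i k * ((∑ s, Q i s) * (∑ t, Q k t)) := by
  have h : ∀ M : Matrix (Fin r) (Fin r) ℝ,
      ∑ s, ∑ t, M s t = (fun _ => 1) ⬝ᵥ (M *ᵥ (fun _ => 1)) := by
    intro M; simp [dotProduct, mulVec]
  rw [h, ← mulVec_mulVec, ← mulVec_mulVec, dotProduct_mulVec, vecMul_transpose]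
  simp only [dotProduct, mulVec, mul_one]
  refine Finset.sum_congr rfl fun i _ => ?_
  rw [Finset.mul_sum]
  refine Finset.sum_congr rfl fun k _ => ?_
  ring

lemma aux_main {n m : ℕ} (A : Matrix (Fin n) (Fin n) ℝ)
    (B : Matrix (Fin m) (Fin m) ℝ) (hB : B.IsSymm) (P : Matrix (Fin n) (Fin m) ℝ)
    (a : Fin n → ℝ) (b : Fin m → ℝ) (ha : ∀ i, ∑ j, P i j = a i) (hb : ∀ j, ∑ i, P i j = b j) :
    ∑ i, ∑ j, ∑ k, ∑ l, (A i k - B j l) ^ 2 * (P i j * P k l)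
      = (∑ i, ∑ k, A i k ^ 2 * (a i * a k)) + (∑ j, ∑ l, B j l ^ 2 * (b j * b l))
        - 2 * ∑ i, ∑ j, P i j * (A * P * B) i j := by
  have h1 : ∑ i, ∑ j, ∑ k, ∑ l, A i k ^ 2 * (P i j * P k l)
      = ∑ i, ∑ k, A i k ^ 2 * (a i * a k) := by
    refine Finset.sum_congr rfl fun i _ => ?_
    rw [Finset.sum_comm]
    refine Finset.sum_congr rfl fun k _ => ?_
    rw [← ha i, ← ha k, Finset.sum_mul_sum, Finset.mul_sum]
    simp only [Finset.mul_sum]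
  have h2 : ∑ i, ∑ j, ∑ k, ∑ l, B j l ^ 2 * (P i j * P k l)
      = ∑ j, ∑ l, B j l ^ 2 * (b j * b l) := by
    rw [Finset.sum_comm]
    refine Finset.sum_congr rfl fun j _ => ?_
    have : ∀ i, ∑ k, ∑ l, B j l ^ 2 * (P i j * P k l)
        = ∑ l, ∑ k, B j l ^ 2 * (P i j * P k l) := fun i => Finset.sum_comm
    simp only [this]
    rw [Finset.sum_comm]
    refine Finset.sum_congr rfl fun l _ => ?_
    rw [← hb j, ← hb l, Finset.sum_mul_sum, Finset.mul_sum]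
    simp only [Finset.mul_sum]
  have h3 : ∑ i, ∑ j, P i j * (A * P * B) i j
      = ∑ i, ∑ j, ∑ k, ∑ l, A i k * B j l * (P i j * P k l) := by
    refine Finset.sum_congr rfl fun i _ => Finset.sum_congr rfl fun j _ => ?_
    rw [Finset.sum_comm, mul_apply, Finset.mul_sum]
    refine Finset.sum_congr rfl fun l _ => ?_
    rw [mul_apply, Finset.sum_mul, Finset.mul_sum]
    refine Finset.sum_congr rfl fun k _ => ?_
    rw [hB.apply j l]
    ring
  rw [← h1, ← h2, h3]
  simp only [Finset.mul_sum, ← Finset.sum_add_distrib, ← Finset.sum_sub_distrib]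
  refine Finset.sum_congr rfl fun i _ => Finset.sum_congr rfl fun j _ =>
    Finset.sum_congr rfl fun k _ => Finset.sum_congr rfl fun l _ => ?_
  ring

/-- Under the latent-coupling constraints `X (Rᵀ 1) = 1` and `Xᵀ (Qᵀ 1) = 1`,
the Gromov–Wasserstein quadratic cost of `P = Q X Rᵀ` reduces to
`1ᵀ Qᵀ A^{⊙2} Q 1 + 1ᵀ Rᵀ B^{⊙2} R 1 − 2 ⟨Q X Rᵀ, A Q X Rᵀ B⟩_F`. -/
theorem stmt15 {n m r₁ r₂ : ℕ} (A : Matrix (Fin n) (Fin n) ℝ)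
    (B : Matrix (Fin m) (Fin m) ℝ) (hB : B.IsSymm)
    (Q : Matrix (Fin n) (Fin r₁) ℝ) (R : Matrix (Fin m) (Fin r₂) ℝ)
    (X : Matrix (Fin r₁) (Fin r₂) ℝ)
    (hX1 : X *ᵥ (Rᵀ *ᵥ (fun _ => 1)) = fun _ => 1)
    (hX2 : Xᵀ *ᵥ (Qᵀ *ᵥ (fun _ => 1)) = fun _ => 1) :
    ∑ i, ∑ j, ∑ k, ∑ l, (A i k - B j l) ^ 2 *
        ((Q * X * Rᵀ) i j * (Q * X * Rᵀ) k l)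
      = (∑ s, ∑ t, (Qᵀ * A.map (fun u => u ^ 2) * Q) s t)
        + (∑ s, ∑ t, (Rᵀ * B.map (fun u => u ^ 2) * R) s t)
        - 2 * ∑ i, ∑ j, (Q * X * Rᵀ) i j * (A * (Q * X * Rᵀ) * B) i j := by
  rw [aux_quad, aux_quad]
  refine aux_main A B hB _ _ _ ?_ ?_
  · intro i
    have h : (Q * X * Rᵀ) *ᵥ (fun _ => 1) = Q *ᵥ (fun _ => 1) := by
      rw [← mulVec_mulVec, ← mulVec_mulVec, hX1]
    simpa [mulVec, dotProduct] using congrFun h i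
  · intro j
    have h : (Q * X * Rᵀ)ᵀ *ᵥ (fun _ => 1) = R *ᵥ (fun _ => 1) := by
      rw [transpose_mul, transpose_mul, transpose_transpose, ← mulVec_mulVec,
        ← mulVec_mulVec, hX2]
    simpa only [mulVec, dotProduct, mul_one, transpose_apply] using congrFun h j
end

section
/- Let K ∈ ℝ^{n×m} be entrywise positive and let a ∈ ℝ^n be entrywise positive. Then the matrix P* = diag(a / (K 1_m)) · K (where division is entrywise) satisfies P* 1_m = a and minimizes the generalized Kullback–Leibler divergence KL(P ∥ K) = Σ_{ij} [P_{ij} log(P_{ij}/K_{ij}) − P_{ij} + K_{ij}] over all entrywise-nonnegative matrices P ∈ ℝ^{n×m} with P 1_m = a (with the convention 0·log 0 = 0). -/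
open Matrix

/-- The generalized Kullback–Leibler divergence between two matrices
(with the convention `0 · log 0 = 0`, automatic since `Real.log 0 = 0`). -/
noncomputable def matKL {n m : ℕ} (P K : Matrix (Fin n) (Fin m) ℝ) : ℝ :=
  ∑ i, ∑ j, (P i j * Real.log (P i j / K i j) - P i j + K i j)

/-- `P* = diag(a / (K 1)) K` satisfies the row-marginal constraint
`P* 1 = a` and minimizes `KL(P ∥ K)` over all entrywise-nonnegative `P` with `P 1 = a`. -/
theorem stmt18 {n m : ℕ} (hm : 0 < m)
    (K : Matrix (Fin n) (Fin m) ℝ) (hK : ∀ i j, 0 < K i j)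
    (a : Fin n → ℝ) (ha : ∀ i, 0 < a i) :
    (∀ i, ∑ j, (Matrix.diagonal (fun i' => a i' / ∑ j', K i' j') * K) i j = a i) ∧
    (∀ P : Matrix (Fin n) (Fin m) ℝ, (∀ i j, 0 ≤ P i j) → (∀ i, ∑ j, P i j = a i) →
      matKL (Matrix.diagonal (fun i' => a i' / ∑ j', K i' j') * K) K ≤ matKL P K) := by
  have hS : ∀ i, 0 < ∑ j, K i j := fun i =>
    Finset.sum_pos (fun j _ => hK i j) ⟨⟨0, hm⟩, Finset.mem_univ _⟩
  have hrow : ∀ i, ∑ j, a i / (∑ j', K i j') * K i j = a i := fun i => by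
    rw [← Finset.mul_sum, div_mul_cancel₀ _ (hS i).ne']
  refine ⟨fun i => by simpa only [Matrix.diagonal_mul] using hrow i, fun P hP hPa => ?_⟩
  unfold matKL
  refine Finset.sum_le_sum fun i _ => ?_
  simp only [Matrix.diagonal_mul]
  have hr := hrow i
  have hc : 0 < a i / ∑ j', K i j' := div_pos (ha i) (hS i)
  generalize a i / ∑ j', K i j' = c at hr hc
  have h1 : ∑ j, (c * K i j * Real.log (c * K i j / K i j) - c * K i j + K i j)
      = ∑ j, (P i j * Real.log c - c * K i j + K i j) := by
    have : ∀ j, c * K i j / K i j = c := fun j => mul_div_cancel_right₀ _ (hK i j).ne'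
    simp only [this, Finset.sum_add_distrib, Finset.sum_sub_distrib, ← Finset.sum_mul, hr, hPa]
  rw [h1]
  refine Finset.sum_le_sum fun j _ => ?_
  have hk := hK i j
  rcases (hP i j).eq_or_lt with h0 | hp
  · rw [← h0]
    have := mul_pos hc hk
    simp only [zero_mul]
    linarith
  · have h2 := Real.log_le_sub_one_of_pos (div_pos (mul_pos hc hk) hp)
    rw [Real.log_div (mul_pos hc hk).ne' hp.ne', Real.log_mul hc.ne' hk.ne'] at h2
    rw [Real.log_div hp.ne' hk.ne']
    have h3 := mul_le_mul_of_nonneg_left h2 hp.le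
    have h4 : P i j * (c * K i j / P i j - 1) = c * K i j - P i j := by
      field_simp
    rw [h4] at h3
    linarith
end
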